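/- arXiv:2507.08796 — 7 statements merged into one kernel-verified Lean document; each statement's English description precedes it below -/
import Mathlib

section
/- If f : List α → List α is filter-equivariant, then for every list xs : List α, every element occurring in f xs also occurs in xs (i.e. the set of values of f xs is contained in the set of values of xs). As a consequence, f applied to the empty list yields the empty list. -/
/-- A function `f : List α → List α` is filter-equivariant if it commutes with
`List.filter p` for every Boolean predicate `p`. -/
def FilterEquivariant {α : Type*} (f : List α → List α) : Prop :=
  ∀ (p : α → Bool) (xs : List α), f (xs.filter p) = (f xs).filter p

namespace FilterEquivariant

variable {α : Type*} {f : List α → List α}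

theorem forall_mem_apply (hf : FilterEquivariant f) {P : α → Prop} {xs : List α}
    (hP : ∀ x ∈ xs, P x) : ∀ y ∈ f xs, P y := by
  classical
  have filter_xs : xs.filter (P ·) = xs := List.filter_eq_self.mpr (by simpa using hP)
  have filter_apply : (f xs).filter (P ·) = f xs := by rw [← hf, filter_xs]
  simpa using List.filter_eq_self.mp filter_apply

theorem apply_subset (hf : FilterEquivariant f) (xs : List α) : f xs ⊆ xs :=
  hf.forall_mem_apply (P := (· ∈ xs)) fun _ hx => hx

theorem apply_nil (hf : FilterEquivariant f) : f [] = [] :=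
  List.subset_nil.mp (hf.apply_subset [])

end FilterEquivariant

theorem filterEquivariant_no_new_values {α : Type*} (f : List α → List α)
    (hf : FilterEquivariant f) :
    (∀ xs : List α, ∀ y ∈ f xs, y ∈ xs) ∧ f [] = [] :=
  ⟨fun xs _ hy => hf.apply_subset xs hy, hf.apply_nil⟩
end

section
/- Let α have decidable equality and let f : List α → List α be filter-equivariant. Define the occurrence function Φ : α → ℕ → ℕ by Φ x n = (f (List.replicate n x)).length. Then for every list xs : List α and every x : α, if x occurs n times in xs then x occurs Φ x n times in f xs; that is, (f xs).count x = Φ x (xs.count x) for all x occurring in xs. -/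
/-- The occurrence function of `f`: `Φ x n` is the length of `f` applied to
`n` copies of `x`. -/
def occ {α : Type*} (f : List α → List α) (x : α) (n : ℕ) : ℕ :=
  (f (List.replicate n x)).length

theorem FilterEquivariant.apply_replicate_count {α : Type*} [BEq α] [LawfulBEq α]
    {f : List α → List α} (hf : FilterEquivariant f) (xs : List α) (x : α) :
    f (List.replicate (xs.count x) x) = List.replicate ((f xs).count x) x :=
  calc f (List.replicate (xs.count x) x)
    _ = f (xs.filter (· == x)) := by rw [List.filter_beq]
    _ = (f xs).filter (· == x) := hf _ xs
    _ = List.replicate ((f xs).count x) x := List.filter_beq x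

theorem filterEquivariant_count_general {α : Type*} [BEq α] [LawfulBEq α]
    (f : List α → List α) (hf : FilterEquivariant f) (xs : List α) (x : α) :
    (f xs).count x = occ f x (xs.count x) := by
  rw [occ, hf.apply_replicate_count, List.length_replicate]

theorem filterEquivariant_count {α : Type*} [DecidableEq α]
    (f : List α → List α) (hf : FilterEquivariant f) (xs : List α) (x : α)
    (hx : x ∈ xs) :
    (f xs).count x = occ f x (xs.count x) :=
  filterEquivariant_count_general f hf xs x
end

section
/- Let α have decidable equality and let f : List α → List α be filter-equivariant. Then for every list xs : List α, the list f xs is a permutation of the concatenation, over the distinct elements x of xs, of List.replicate (Φ x (xs.count x)) x, where Φ x n = (f (List.replicate n x)).length. Equivalently, f xs is a permutation of xs.dedup.flatMap (fun x => f (List.replicate (xs.count x) x)). -/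
/-!
A list is determined up to permutation by its element counts. Filtering `xs` by `· ∈ xs` shows that
`f xs` contains no element outside `xs`; filtering by `· == a` shows that `f` sends the copies of
`a` in `xs` to exactly the copies of `a` in `f xs`.
-/

theorem count_flatMap_replicate {α : Type*} [DecidableEq α] (g : α → ℕ) (a : α) (l : List α) :
    (l.flatMap fun x => List.replicate (g x) x).count a = l.count a * g a := by
  induction l with
  | nil => simp
  | cons b l ih =>
    rw [List.flatMap_cons, List.count_append, ih, List.count_replicate, List.count_cons]
    obtain rfl | hba := eq_or_ne b a
    · simp [add_mul, add_comm]
    · simp [hba]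

theorem perm_flatMap_replicate_count {α : Type*} [DecidableEq α] {l ys : List α}
    (hl : l.Nodup) (hsub : ys ⊆ l) :
    ys.Perm (l.flatMap fun x => List.replicate (ys.count x) x) := by
  rw [List.perm_iff_count]
  intro a
  rw [count_flatMap_replicate]
  by_cases ha : a ∈ ys
  · rw [List.count_eq_one_of_mem hl (hsub ha), one_mul]
  · rw [List.count_eq_zero_of_not_mem ha, mul_zero]

namespace FilterEquivariant

variable {α : Type*} {f : List α → List α}

theorem apply_replicate_count_s9 [DecidableEq α] (hf : FilterEquivariant f) (xs : List α) (a : α) :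
    f (List.replicate (xs.count a) a) = List.replicate ((f xs).count a) a := by
  simpa only [List.filter_beq] using hf (· == a) xs

end FilterEquivariant

theorem filterEquivariant_perm_concat_replicate {α : Type*} [DecidableEq α]
    (f : List α → List α) (hf : FilterEquivariant f) (xs : List α) :
    (f xs).Perm
      (xs.dedup.flatMap fun x =>
        List.replicate (f (List.replicate (xs.count x) x)).length x) := by
  have hsub : f xs ⊆ xs.dedup := fun _ hy => List.mem_dedup.2 (hf.apply_subset xs hy)
  simpa only [hf.apply_replicate_count_s9, List.length_replicate] using
    perm_flatMap_replicate_count xs.nodup_dedup hsub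
end

section
/- For every linear order α and every Boolean predicate p : α → Bool, sorting commutes with filtering: (xs.filter p).mergeSort (· ≤ ·) = (xs.mergeSort (· ≤ ·)).filter p for every list xs : List α. In other words, the sort function is filter-equivariant. -/
/-!
Merge sort is stable, so it agrees with insertion sort even when distinct elements may tie. Hence it
suffices that inserting a single element commutes with filtering. An element rejected by the
predicate leaves no trace after filtering. An element `a` that is kept goes in front of the first
`b` with `r a b`; since the list is sorted, `r a c` holds for every `c` from that `b` onwards and
for no earlier one, and filtering preserves this division.
-/

section OrderedInsert

variable {α : Type*} (r : α → α → Prop) [DecidableRel r]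

theorem orderedInsert_append_of_forall {a : α} {l₁ l₂ : List α}
    (h₁ : ∀ b ∈ l₁, ¬ r a b) (h₂ : ∀ b ∈ l₂, r a b) :
    (l₁ ++ l₂).orderedInsert r a = l₁ ++ a :: l₂ := by
  induction l₁ with
  | nil => cases l₂ <;> simp_all
  | cons b l₁ ih => simp_all

theorem orderedInsert_of_forall_rel {a : α} {l : List α} (h : ∀ b ∈ l, r a b) :
    l.orderedInsert r a = a :: l :=
  orderedInsert_append_of_forall r (l₁ := []) (by simp) h

theorem filter_orderedInsert_of_neg {p : α → Bool} {a : α} (ha : ¬ p a) (l : List α) :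
    (l.orderedInsert r a).filter p = l.filter p := by
  rw [List.orderedInsert_eq_take_drop, List.filter_append, List.filter_cons_of_neg ha,
    ← List.filter_append, List.takeWhile_append_dropWhile]

theorem filter_orderedInsert_of_pos [IsTrans α r] {p : α → Bool} {a : α} (ha : p a)
    {l : List α} (hl : l.Pairwise r) :
    (l.orderedInsert r a).filter p = (l.filter p).orderedInsert r a := by
  induction l with
  | nil => simp [ha]
  | cons b l ih =>
    obtain ⟨hb, hl⟩ := List.pairwise_cons.mp hl
    by_cases hab : r a b
    · have rel_of_mem : ∀ c ∈ b :: l, r a c :=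
        List.forall_mem_cons.mpr ⟨hab, fun c hc => _root_.trans hab (hb c hc)⟩
      rw [orderedInsert_of_forall_rel r rel_of_mem, List.filter_cons_of_pos ha,
        orderedInsert_of_forall_rel r fun c hc => rel_of_mem c (List.mem_of_mem_filter hc)]
    · rw [List.orderedInsert_of_not_le r l hab]
      by_cases hpb : p b
      · rw [List.filter_cons_of_pos hpb, List.filter_cons_of_pos hpb, ih hl,
          List.orderedInsert_of_not_le r _ hab]
      · rw [List.filter_cons_of_neg hpb, List.filter_cons_of_neg hpb, ih hl]

end OrderedInsert

section TotalPreorder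

variable {α : Type*} (r : α → α → Prop) [DecidableRel r] [Std.Total r] [IsTrans α r]

theorem filter_insertionSort (p : α → Bool) (xs : List α) :
    (xs.insertionSort r).filter p = (xs.filter p).insertionSort r := by
  induction xs with
  | nil => rfl
  | cons a xs ih =>
    rw [List.insertionSort_cons]
    by_cases ha : p a
    · rw [filter_orderedInsert_of_pos r ha (List.pairwise_insertionSort r xs), ih,
        List.filter_cons_of_pos ha, List.insertionSort_cons]
    · rw [filter_orderedInsert_of_neg r ha, ih, List.filter_cons_of_neg ha]

theorem mergeSort_cons_eq_orderedInsert (a : α) (l : List α) :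
    (a :: l).mergeSort (r · ·) = (l.mergeSort (r · ·)).orderedInsert r a := by
  obtain ⟨l₁, l₂, hcons, hl, hl₁⟩ := List.mergeSort_cons (le := (r · ·))
    (by simpa using fun _ _ _ => trans_of r) (by simpa using total_of r) a l
  have sorted : (l₁ ++ a :: l₂).Pairwise r := hcons ▸ List.pairwise_mergeSort' r (a :: l)
  have hl₂ : ∀ b ∈ l₂, r a b := (List.pairwise_cons.mp (List.pairwise_append.mp sorted).2.1).1
  rw [hcons, hl, orderedInsert_append_of_forall r (by simpa using hl₁) hl₂]

theorem mergeSort_eq_insertionSort_of_total_of_trans (l : List α) :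
    l.mergeSort (r · ·) = l.insertionSort r := by
  induction l with
  | nil => simp
  | cons a l ih => rw [mergeSort_cons_eq_orderedInsert, ih, List.insertionSort_cons]

theorem mergeSort_filterEquivariant_general (p : α → Bool) (xs : List α) :
    (xs.filter p).mergeSort (r · ·) = (xs.mergeSort (r · ·)).filter p := by
  simp only [mergeSort_eq_insertionSort_of_total_of_trans, filter_insertionSort]

end TotalPreorder

theorem mergeSort_filterEquivariant {α : Type*} [LinearOrder α]
    (p : α → Bool) (xs : List α) :
    (xs.filter p).mergeSort (· ≤ ·) = (xs.mergeSort (· ≤ ·)).filter p :=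
  mergeSort_filterEquivariant_general (· ≤ ·) p xs
end

section
/- Let α have decidable equality and let xs, ys : List α be lists such that xs has at least three distinct elements (xs.toFinset.card ≥ 3). If for every x occurring in xs, xs.filter (· ≠ x) = ys.filter (· ≠ x), then xs = ys. That is, a list with at least three distinct elements is uniquely determined by (and can be reconstructed from) the collection of its one-element-removed filtered versions. -/
/-!
If some filter keeps both heads `x` and `y` of two nonempty lists and has the same output on the two
lists, then `x = y`. Among three distinct elements one differs from both `x` and `y`, so deleting
that element is such a filter; the tails are compared by induction.
-/

theorem eq_of_forall_filter_eq {α : Type*} {ι : Sort*} {p : ι → α → Bool}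
    (hp : ∀ x y, ∃ i, p i x ∧ p i y) {xs ys : List α}
    (h : ∀ i, xs.filter (p i) = ys.filter (p i)) : xs = ys := by
  induction xs generalizing ys with
  | nil =>
    refine (List.eq_nil_iff_forall_not_mem.mpr fun y hy => ?_).symm
    obtain ⟨i, hi, -⟩ := hp y y
    exact List.filter_eq_nil_iff.mp (h i).symm y hy hi
  | cons x xs ih =>
    cases ys with
    | nil =>
      obtain ⟨i, hi, -⟩ := hp x x
      exact absurd hi (List.filter_eq_nil_iff.mp (h i) x List.mem_cons_self)
    | cons y ys =>
      obtain ⟨i, hx, hy⟩ := hp x y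
      have head_eq : x = y := by
        have hi := h i
        rw [List.filter_cons_of_pos hx, List.filter_cons_of_pos hy] at hi
        exact List.head_eq_of_cons_eq hi
      subst head_eq
      have tail_filter_eq (j : ι) : xs.filter (p j) = ys.filter (p j) := by
        have hj : ([x] ++ xs).filter (p j) = ([x] ++ ys).filter (p j) := h j
        rw [List.filter_append, List.filter_append] at hj
        exact List.append_cancel_left hj
      rw [ih tail_filter_eq]

theorem exists_mem_ne_ne_of_two_lt_card {α : Type*} {s : Finset α} (hs : 2 < s.card) (x y : α) :
    ∃ z ∈ s, x ≠ z ∧ y ≠ z := by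
  classical
  have card_pair_lt : ({x, y} : Finset α).card < s.card := Finset.card_le_two.trans_lt hs
  obtain ⟨z, hz, hz_pair⟩ := Finset.exists_mem_notMem_of_card_lt_card card_pair_lt
  rw [Finset.mem_insert, Finset.mem_singleton, not_or] at hz_pair
  exact ⟨z, hz, Ne.symm hz_pair.1, Ne.symm hz_pair.2⟩

theorem eq_of_filter_ne_eq_general {α : Type*} [DecidableEq α] {s : Finset α} (hs : 2 < s.card)
    {xs ys : List α} (h : ∀ z ∈ s, xs.filter (· ≠ z) = ys.filter (· ≠ z)) : xs = ys := by
  refine eq_of_forall_filter_eq (p := fun (z : s) (x : α) => x ≠ z) (fun x y => ?_)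
    fun z => h z z.2
  obtain ⟨z, hz, hxz, hyz⟩ := exists_mem_ne_ne_of_two_lt_card hs x y
  exact ⟨⟨z, hz⟩, decide_eq_true hxz, decide_eq_true hyz⟩

theorem eq_of_filter_ne_eq {α : Type*} [DecidableEq α] (xs ys : List α)
    (hcard : 3 ≤ xs.toFinset.card)
    (h : ∀ x ∈ xs, xs.filter (· ≠ x) = ys.filter (· ≠ x)) :
    xs = ys :=
  eq_of_filter_ne_eq_general hcard fun x hx => h x (List.mem_toFinset.mp hx)
end

section
/- Let α have decidable equality, let f, g : List α → List α be filter-equivariant, and let xs : List α have at least three distinct elements (xs.toFinset.card ≥ 3). If f (xs.filter (· ≠ x)) = g (xs.filter (· ≠ x)) for every x occurring in xs, then f xs = g xs. That is, a filter-equivariant function's output on xs is uniquely determined by its outputs on the one-element-removed filtered versions of xs. -/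
/-!
Filters that jointly keep every pair of elements separate lists: a filter keeping both heads shows
that the heads agree, after which they can be cancelled. By equivariance, agreement of `f` and `g`
on the filtered versions of `xs` is agreement of `f xs` and `g xs` after filtering, and neither
output contains an element outside `xs`. Among three distinct elements of `xs` one always differs
from both members of a given pair, so the filters removing one element keep every pair.
-/

section PairCover

variable {α : Type*} {ι : Sort*} {q : α → Bool} {p : ι → α → Bool} {l ys zs : List α}

theorem filter_tail_eq_of_filter_cons_eq {a : α}
    (h : (a :: ys).filter q = (a :: zs).filter q) : ys.filter q = zs.filter q := by
  cases hqa : q a <;> simpa [hqa] using h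

theorem head_eq_of_filter_cons_eq {a b : α}
    (ha : q a) (hb : q b) (h : (a :: ys).filter q = (b :: zs).filter q) : a = b := by
  rw [List.filter_cons_of_pos ha, List.filter_cons_of_pos hb] at h
  exact List.head_eq_of_cons_eq h

theorem eq_nil_of_forall_filter_eq_nil (hp : ∀ a ∈ l, ∃ i, p i a)
    (h : ∀ i, l.filter (p i) = []) : l = [] := by
  refine List.eq_nil_iff_forall_not_mem.mpr fun a ha ↦ ?_
  obtain ⟨i, hi⟩ := hp a ha
  exact List.filter_eq_nil_iff.mp (h i) a ha hi

theorem list_eq_of_forall_filter_eq (hp : ∀ a ∈ l, ∀ b ∈ l, ∃ i, p i a ∧ p i b)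
    (hys : ys ⊆ l) (hzs : zs ⊆ l)
    (h : ∀ i, ys.filter (p i) = zs.filter (p i)) : ys = zs := by
  have hp_single : ∀ a ∈ l, ∃ i, p i a := fun a ha ↦ (hp a ha a ha).imp fun _ ↦ And.left
  induction ys generalizing zs with
  | nil => exact (eq_nil_of_forall_filter_eq_nil (fun b hb ↦ hp_single b (hzs hb))
      fun i ↦ (h i).symm).symm
  | cons a ys ih =>
    cases zs with
    | nil => exact eq_nil_of_forall_filter_eq_nil (fun b hb ↦ hp_single b (hys hb)) h
    | cons b zs =>
      obtain ⟨ha, hys_tail⟩ := List.cons_subset.mp hys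
      obtain ⟨hb, hzs_tail⟩ := List.cons_subset.mp hzs
      obtain ⟨i, hia, hib⟩ := hp a ha b hb
      obtain rfl : a = b := head_eq_of_filter_cons_eq hia hib (h i)
      rw [ih hys_tail hzs_tail fun j ↦ filter_tail_eq_of_filter_cons_eq (h j)]

theorem FilterEquivariant.subset {f : List α → List α} (hf : FilterEquivariant f)
    (xs : List α) : f xs ⊆ xs := by
  classical
  have hfilter : (f xs).filter (· ∈ xs) = f xs := by
    rw [← hf, List.filter_eq_self.mpr fun a ha ↦ decide_eq_true ha]
  exact fun a ha ↦ of_decide_eq_true (List.filter_eq_self.mp hfilter a ha)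

theorem filterEquivariant_determined_by_one_removed_general {f g : List α → List α}
    (hf : FilterEquivariant f) (hg : FilterEquivariant g) {xs : List α}
    (hp : ∀ a ∈ xs, ∀ b ∈ xs, ∃ i, p i a ∧ p i b)
    (h : ∀ i, f (xs.filter (p i)) = g (xs.filter (p i))) : f xs = g xs :=
  list_eq_of_forall_filter_eq hp (hf.subset xs) (hg.subset xs) fun i ↦ by
    rw [← hf, ← hg, h i]

end PairCover

theorem exists_mem_ne_ne_of_three_le_card {α : Type*} {s : Finset α}
    (hs : 3 ≤ s.card) (a b : α) : ∃ x ∈ s, a ≠ x ∧ b ≠ x := by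
  classical
  obtain ⟨x, hxs, hxab⟩ : ∃ x ∈ s, x ∉ ({a, b} : Finset α) :=
    Finset.exists_mem_notMem_of_card_lt_card (Finset.card_le_two.trans_lt hs)
  rw [Finset.mem_insert, Finset.mem_singleton, not_or] at hxab
  exact ⟨x, hxs, Ne.symm hxab.1, Ne.symm hxab.2⟩

theorem filterEquivariant_determined_by_one_removed {α : Type*} [DecidableEq α]
    (f g : List α → List α) (hf : FilterEquivariant f) (hg : FilterEquivariant g)
    (xs : List α) (hcard : 3 ≤ xs.toFinset.card)
    (h : ∀ x ∈ xs, f (xs.filter (· ≠ x)) = g (xs.filter (· ≠ x))) :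
    f xs = g xs := by
  refine filterEquivariant_determined_by_one_removed_general hf hg
    (p := fun (x : {x // x ∈ xs}) (a : α) ↦ a ≠ x) (fun a _ b _ ↦ ?_) fun x ↦ h x x.2
  obtain ⟨x, hx, hax, hbx⟩ := exists_mem_ne_ne_of_three_le_card hcard a b
  exact ⟨⟨x, List.mem_toFinset.mp hx⟩, decide_eq_true hax, decide_eq_true hbx⟩
end

section
/- Let α have decidable equality, let f, g : List α → List α be filter-equivariant, and let xs : List α have at least three distinct elements (xs.toFinset.card ≥ 3). Suppose that for all x, y occurring in xs, f and g agree on the sublist of xs retaining only the values x and y, i.e. f (xs.filter (fun z => z = x ∨ z = y)) = g (xs.filter (fun z => z = x ∨ z = y)). Then f xs = g xs. That is, any filter-equivariant function's output on xs is uniquely determined by its outputs on the sublists of xs with two unique elements. -/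
/-!
A list over at least two values is determined by its restrictions to pairs of distinct values:
were two such lists to start with different values `a` and `b`, their restrictions to `{a, b}`
would already start differently, and a common head can be cancelled from every restriction.
A filter-equivariant function creates no new values and commutes with restriction, so its output
on `xs` is recovered from its outputs on the restrictions of `xs` to two values.
-/

theorem FilterEquivariant.apply_subset_s15 {α : Type*} {f : List α → List α}
    (hf : FilterEquivariant f) (xs : List α) : f xs ⊆ xs := by
  classical
  have hfilter : (f xs).filter (· ∈ xs) = f xs := by
    rw [← hf, List.filter_eq_self.2 (by simp)]
  intro a ha
  simpa using List.filter_eq_self.1 hfilter a ha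

theorem filter_eq_of_filter_cons_eq_filter_cons {α : Type*} {p : α → Bool} {a : α} {l m : List α}
    (h : (a :: l).filter p = (a :: m).filter p) : l.filter p = m.filter p := by
  rw [← List.singleton_append, ← List.singleton_append (l := m), List.filter_append,
    List.filter_append] at h
  exact List.append_cancel_left h

theorem eq_of_filter_cons_eq_filter_cons {α : Type*} {p : α → Bool} {a b : α} {l m : List α}
    (ha : p a) (hb : p b) (h : (a :: l).filter p = (b :: m).filter p) : a = b := by
  rw [List.filter_cons_of_pos ha, List.filter_cons_of_pos hb] at h
  exact List.head_eq_of_cons_eq h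

section PairwiseFilter

variable {α : Type*} [DecidableEq α] {S : Set α} {l m : List α}

theorem mem_iff_mem_of_pairwise_filter_eq (hS : S.Nontrivial)
    (h : S.Pairwise fun x y =>
      l.filter (fun z => z = x ∨ z = y) = m.filter (fun z => z = x ∨ z = y))
    {a : α} (ha : a ∈ S) : a ∈ l ↔ a ∈ m := by
  obtain ⟨b, hb, hba⟩ := hS.exists_ne a
  simpa using congrArg (a ∈ ·) (h ha hb hba.symm)

theorem eq_of_pairwise_filter_eq (hS : S.Nontrivial) (hl : ∀ a ∈ l, a ∈ S) (hm : ∀ a ∈ m, a ∈ S)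
    (h : S.Pairwise fun x y =>
      l.filter (fun z => z = x ∨ z = y) = m.filter (fun z => z = x ∨ z = y)) :
    l = m := by
  induction l generalizing m with
  | nil =>
    refine (List.eq_nil_iff_forall_not_mem.2 fun b hb => ?_).symm
    exact List.not_mem_nil ((mem_iff_mem_of_pairwise_filter_eq hS h (hm b hb)).2 hb)
  | cons a l ih =>
    obtain ⟨ha, hlS⟩ := List.forall_mem_cons.1 hl
    cases m with
    | nil =>
      have ha_nil := (mem_iff_mem_of_pairwise_filter_eq hS h ha).1 List.mem_cons_self
      exact absurd ha_nil List.not_mem_nil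
    | cons b m =>
      obtain ⟨hb, hmS⟩ := List.forall_mem_cons.1 hm
      obtain rfl : a = b := by
        by_contra hab
        exact hab (eq_of_filter_cons_eq_filter_cons (by simp) (by simp) (h ha hb hab))
      have htail : l = m :=
        ih hlS hmS (h.imp fun _ _ => filter_eq_of_filter_cons_eq_filter_cons)
      rw [htail]

end PairwiseFilter

theorem filterEquivariant_determined_by_two_unique_general {α : Type*} [DecidableEq α]
    {f g : List α → List α} (hf : FilterEquivariant f) (hg : FilterEquivariant g)
    {xs : List α} (hcard : 2 ≤ xs.toFinset.card)
    (h : ∀ x ∈ xs, ∀ y ∈ xs, x ≠ y →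
      f (xs.filter (fun z => z = x ∨ z = y)) = g (xs.filter (fun z => z = x ∨ z = y))) :
    f xs = g xs := by
  have hS : {z | z ∈ xs}.Nontrivial := by
    simpa [Finset.Nontrivial] using Finset.one_lt_card_iff_nontrivial.1 hcard
  refine eq_of_pairwise_filter_eq hS (hf.apply_subset_s15 xs) (hg.apply_subset_s15 xs) ?_
  intro x hx y hy hxy
  rw [← hf, ← hg]
  exact h x hx y hy hxy

theorem filterEquivariant_determined_by_two_unique {α : Type*} [DecidableEq α]
    (f g : List α → List α) (hf : FilterEquivariant f) (hg : FilterEquivariant g)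
    (xs : List α) (hcard : 3 ≤ xs.toFinset.card)
    (h : ∀ x ∈ xs, ∀ y ∈ xs,
      f (xs.filter (fun z => z = x ∨ z = y)) = g (xs.filter (fun z => z = x ∨ z = y))) :
    f xs = g xs :=
  filterEquivariant_determined_by_two_unique_general hf hg (Nat.le_of_succ_le hcard)
    fun x hx y hy _ => h x hx y hy
end
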